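/- The function A ↦ Σᵢ₌₁ⁿ arctan λᵢ(A), where λ₁(A) ≤ ⋯ ≤ λₙ(A) are the eigenvalues of A, is concave on the convex cone of symmetric positive semidefinite n×n real matrices. -/

import Mathlib

/-- `F(A) = ∑ᵢ arctan λᵢ(A)`, the sum of the arctangents of the eigenvalues of a
symmetric matrix `A` (junk value `0` if `A` is not symmetric). -/
noncomputable def lagF {n : ℕ} (A : Matrix (Fin n) (Fin n) ℝ) : ℝ :=
  if h : A.IsHermitian then ∑ i, Real.arctan (h.eigenvalues i) else 0

/-!
For concave `f` the trace function `A ↦ tr f(A)` is concave. Expanding a unit vector `v` in an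
eigenbasis of `A` writes `⟨v, A v⟩` as an average of the eigenvalues of `A`, and `⟨v, f(A) v⟩` as
the average of their images under `f` with the same weights, so `⟨v, f(A) v⟩ ≤ f ⟨v, A v⟩` by
Jensen's inequality. Now let `v` run through an eigenbasis of `C = a A + b B`: the `i`-th
eigenvalue of `C` is `a ⟨vᵢ, A vᵢ⟩ + b ⟨vᵢ, B vᵢ⟩`, hence
`tr f(C) ≥ ∑ᵢ (a f ⟨vᵢ, A vᵢ⟩ + b f ⟨vᵢ, B vᵢ⟩) ≥ a tr f(A) + b tr f(B)`,
the last step being Peierls' inequality for `A` and for `B`.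
-/

open Matrix RCLike
open scoped InnerProductSpace

section TraceFunctions

variable {𝕜 ι : Type*} [RCLike 𝕜]

theorem isHermitian_smul_add_smul {A B : Matrix ι ι 𝕜} (hA : A.IsHermitian) (hB : B.IsHermitian)
    (a b : ℝ) : (a • A + b • B).IsHermitian :=
  (hA.smul (.all a)).add (hB.smul (.all b))

theorem sum_sq_norm_inner_eq_one [Fintype ι] {E : Type*} [NormedAddCommGroup E]
    [InnerProductSpace 𝕜 E] (b : OrthonormalBasis ι 𝕜 E) {v : E} (hv : ‖v‖ = 1) :
    ∑ i, ‖⟪b i, v⟫_𝕜‖ ^ 2 = 1 := by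
  rw [b.sum_sq_norm_inner_right, hv, one_pow]

variable [Fintype ι] [DecidableEq ι] {A : Matrix ι ι 𝕜} {f : ℝ → ℝ} {s : Set ℝ}

/-- The real part of the quadratic form `⟨v, A v⟩`, as a linear function of the matrix `A` for a
fixed vector `v`. -/
noncomputable def reQuadForm (v : EuclideanSpace 𝕜 ι) : Matrix ι ι 𝕜 →ₗ[ℝ] ℝ where
  toFun A := re ⟪v, toEuclideanLin A v⟫_𝕜
  map_add' A B := by rw [map_add, LinearMap.add_apply, inner_add_right, map_add]
  map_smul' c A := by
    rw [real_smul_eq_coe_smul (K := 𝕜), map_smul, LinearMap.smul_apply, inner_smul_right,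
      re_ofReal_mul, RingHom.id_apply, smul_eq_mul]

theorem reQuadForm_apply (v : EuclideanSpace 𝕜 ι) (A : Matrix ι ι 𝕜) :
    reQuadForm v A = re ⟪v, toEuclideanLin A v⟫_𝕜 :=
  rfl

theorem re_trace_eq_sum_reQuadForm (A : Matrix ι ι 𝕜)
    (b : OrthonormalBasis ι 𝕜 (EuclideanSpace 𝕜 ι)) :
    re A.trace = ∑ i, reQuadForm (b i) A := by
  have trace_eq : A.trace = (toEuclideanLin A).trace 𝕜 _ :=
    (trace_toLin_eq A (PiLp.basisFun 2 𝕜 ι)).symm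
  simp only [trace_eq, LinearMap.trace_eq_sum_inner _ b, map_sum, reQuadForm_apply]

theorem toEuclideanLin_cfc_eigenvectorBasis (hA : A.IsHermitian) (f : ℝ → ℝ) (i : ι) :
    toEuclideanLin (cfc f A) (hA.eigenvectorBasis i) =
      (f (hA.eigenvalues i) : 𝕜) • hA.eigenvectorBasis i := by
  have diagonal_mulVec_single_one (d : ι → 𝕜) :
      diagonal d *ᵥ Pi.single i 1 = d i • (Pi.single i 1 : ι → 𝕜) := by
    rw [diagonal_mulVec_single, ← Pi.single_smul, smul_eq_mul]
  rw [hA.cfc_eq, IsHermitian.cfc, Unitary.conjStarAlgAut_apply, toLpLin_apply, ← mulVec_mulVec,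
    ← mulVec_mulVec, hA.star_eigenvectorUnitary_mulVec, diagonal_mulVec_single_one,
    mulVec_smul, hA.eigenvectorUnitary_mulVec]
  rfl

theorem reQuadForm_cfc_eq_sum (hA : A.IsHermitian) (f : ℝ → ℝ) (v : EuclideanSpace 𝕜 ι) :
    reQuadForm v (cfc f A) = ∑ i, ‖⟪hA.eigenvectorBasis i, v⟫_𝕜‖ ^ 2 * f (hA.eigenvalues i) := by
  have symm : (toEuclideanLin (cfc f A)).IsSymmetric :=
    isSymmetric_toEuclideanLin_iff.mpr (cfc_predicate f A)
  rw [reQuadForm_apply, ← hA.eigenvectorBasis.sum_inner_mul_inner, map_sum]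
  refine Finset.sum_congr rfl fun i _ ↦ ?_
  rw [← symm, toEuclideanLin_cfc_eigenvectorBasis hA, inner_smul_left, conj_ofReal,
    mul_left_comm, re_ofReal_mul, ← inner_conj_symm, RCLike.conj_mul, ← ofReal_pow, ofReal_re,
    mul_comm]

theorem reQuadForm_eq_sum (hA : A.IsHermitian) (v : EuclideanSpace 𝕜 ι) :
    reQuadForm v A = ∑ i, ‖⟪hA.eigenvectorBasis i, v⟫_𝕜‖ ^ 2 * hA.eigenvalues i := by
  simpa only [cfc_id ℝ A hA.isSelfAdjoint, id] using reQuadForm_cfc_eq_sum hA id v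

theorem reQuadForm_eigenvectorBasis (hA : A.IsHermitian) (i : ι) :
    reQuadForm (hA.eigenvectorBasis i) A = hA.eigenvalues i := by
  rw [hA.eigenvalues_eq, dotProduct_comm]
  rfl

theorem re_trace_cfc_eq_sum_eigenvalues (hA : A.IsHermitian) (f : ℝ → ℝ) :
    re (cfc f A).trace = ∑ i, f (hA.eigenvalues i) := by
  rw [re_trace_eq_sum_reQuadForm _ hA.eigenvectorBasis]
  refine Finset.sum_congr rfl fun i _ ↦ ?_
  rw [reQuadForm_apply, toEuclideanLin_cfc_eigenvectorBasis, inner_smul_right,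
    hA.eigenvectorBasis.inner_eq_one, mul_one, ofReal_re]

theorem reQuadForm_mem (hs : Convex ℝ s) (hA : A.IsHermitian) (hAs : spectrum ℝ A ⊆ s)
    {v : EuclideanSpace 𝕜 ι} (hv : ‖v‖ = 1) : reQuadForm v A ∈ s := by
  rw [reQuadForm_eq_sum hA]
  exact hs.sum_mem (fun _ _ ↦ sq_nonneg _) (sum_sq_norm_inner_eq_one _ hv)
    fun i _ ↦ hAs (hA.eigenvalues_mem_spectrum_real i)

theorem reQuadForm_cfc_le_map_reQuadForm (hf : ConcaveOn ℝ s f) (hA : A.IsHermitian)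
    (hAs : spectrum ℝ A ⊆ s) {v : EuclideanSpace 𝕜 ι} (hv : ‖v‖ = 1) :
    reQuadForm v (cfc f A) ≤ f (reQuadForm v A) := by
  rw [reQuadForm_cfc_eq_sum hA, reQuadForm_eq_sum hA]
  exact hf.le_map_sum (fun _ _ ↦ sq_nonneg _) (sum_sq_norm_inner_eq_one _ hv)
    fun i _ ↦ hAs (hA.eigenvalues_mem_spectrum_real i)

theorem re_trace_cfc_le_sum_map_reQuadForm (hf : ConcaveOn ℝ s f) (hA : A.IsHermitian)
    (hAs : spectrum ℝ A ⊆ s) (b : OrthonormalBasis ι 𝕜 (EuclideanSpace 𝕜 ι)) :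
    re (cfc f A).trace ≤ ∑ i, f (reQuadForm (b i) A) := by
  rw [re_trace_eq_sum_reQuadForm _ b]
  exact Finset.sum_le_sum fun i _ ↦ reQuadForm_cfc_le_map_reQuadForm hf hA hAs (b.norm_eq_one i)

theorem eigenvalues_smul_add_smul {B : Matrix ι ι 𝕜} {a b : ℝ}
    (hC : (a • A + b • B).IsHermitian) (i : ι) :
    hC.eigenvalues i =
      a • reQuadForm (hC.eigenvectorBasis i) A + b • reQuadForm (hC.eigenvectorBasis i) B := by
  rw [← reQuadForm_eigenvectorBasis, map_add, map_smul, map_smul]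

theorem convex_setOf_isHermitian_spectrum_subset (hs : Convex ℝ s) :
    Convex ℝ {A : Matrix ι ι 𝕜 | A.IsHermitian ∧ spectrum ℝ A ⊆ s} := by
  rintro A ⟨hA, hAs⟩ B ⟨hB, hBs⟩ a b ha hb hab
  have hC := isHermitian_smul_add_smul hA hB a b
  refine ⟨hC, ?_⟩
  rw [hC.spectrum_real_eq_range_eigenvalues]
  rintro _ ⟨i, rfl⟩
  have unit := hC.eigenvectorBasis.norm_eq_one i
  rw [eigenvalues_smul_add_smul]
  exact hs (reQuadForm_mem hs hA hAs unit) (reQuadForm_mem hs hB hBs unit) ha hb hab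

/-- The spectrum of a matrix is finite, so every `f` is continuous on it and `cfc f A` is not a junk
value for Hermitian `A`. -/
theorem lagF_concave_on_posSemidef_general (hf : ConcaveOn ℝ s f) :
    ConcaveOn ℝ {A : Matrix ι ι 𝕜 | A.IsHermitian ∧ spectrum ℝ A ⊆ s}
      fun A ↦ re (cfc f A).trace := by
  refine ⟨convex_setOf_isHermitian_spectrum_subset hf.1, ?_⟩
  rintro A ⟨hA, hAs⟩ B ⟨hB, hBs⟩ a b ha hb hab
  have hC := isHermitian_smul_add_smul hA hB a b
  let v := hC.eigenvectorBasis
  calc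
    a • re (cfc f A).trace + b • re (cfc f B).trace
      ≤ a • ∑ i, f (reQuadForm (v i) A) + b • ∑ i, f (reQuadForm (v i) B) := by
        gcongr
        · exact re_trace_cfc_le_sum_map_reQuadForm hf hA hAs v
        · exact re_trace_cfc_le_sum_map_reQuadForm hf hB hBs v
    _ = ∑ i, (a • f (reQuadForm (v i) A) + b • f (reQuadForm (v i) B)) := by
        rw [Finset.sum_add_distrib, Finset.smul_sum, Finset.smul_sum]
    _ ≤ ∑ i, f (hC.eigenvalues i) := by
        refine Finset.sum_le_sum fun i _ ↦ ?_
        have unit := v.norm_eq_one i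
        rw [eigenvalues_smul_add_smul]
        exact hf.2 (reQuadForm_mem hf.1 hA hAs unit) (reQuadForm_mem hf.1 hB hBs unit) ha hb hab
    _ = re (cfc f (a • A + b • B)).trace := (re_trace_cfc_eq_sum_eigenvalues hC f).symm

end TraceFunctions

theorem lagF_eq_trace_cfc {n : ℕ} :
    (lagF : Matrix (Fin n) (Fin n) ℝ → ℝ) = fun A ↦ (cfc Real.arctan A).trace := by
  funext A
  by_cases hA : A.IsHermitian
  · rw [lagF, dif_pos hA, ← re_trace_cfc_eq_sum_eigenvalues hA, re_to_real]
  · rw [lagF, dif_neg hA, cfc_apply_of_not_predicate A fun h ↦ hA h.isHermitian, trace_zero]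

theorem concaveOn_arctan_Ici : ConcaveOn ℝ (Set.Ici 0) Real.arctan := by
  refine AntitoneOn.concaveOn_of_deriv (convex_Ici 0) Real.continuous_arctan.continuousOn
    Real.differentiable_arctan.differentiableOn ?_
  rw [interior_Ici, Real.deriv_arctan]
  intro x (hx : 0 < x) y _ hxy
  dsimp only
  gcongr

/-- The function `A ↦ ∑ᵢ arctan λᵢ(A)` is concave on the convex cone of symmetric
positive semidefinite `n × n` real matrices. -/
theorem lagF_concave_on_posSemidef (n : ℕ) :
    ConcaveOn ℝ {A : Matrix (Fin n) (Fin n) ℝ | A.PosSemidef} lagF := by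
  simp only [lagF_eq_trace_cfc, posSemidef_iff_isHermitian_and_spectrum_nonneg]
  exact lagF_concave_on_posSemidef_general concaveOn_arctan_Ici
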